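/- arXiv:2010.04662 — 2 statements merged into one kernel-verified Lean document; each statement's English description precedes it below -/
import Mathlib

section
/- Let K be a field, t ∈ ℤ^n, let F ∈ K[x]^{n×n} be in t-weak Popov form, and let u = rdeg_t(F) ∈ ℤ^n. Let G ∈ K[x]^{m×n} and v ∈ ℤ^m with v ≥ rdeg_t(G) entrywise. Let [K1 K2] ∈ K[x]^{m×(n+m)} be a basis of the left kernel of the stacked matrix [F; G] ∈ K[x]^{(n+m)×n} which is in (u,v)-weak Popov form, where K1 has n columns and K2 has m columns. Then every (u,v)-pivot index of [K1 K2] is greater than n (i.e., all (u,v)-pivot entries of [K1 K2] lie in K2), and K2 is in v-weak Popov form. -/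
open Polynomial Matrix

/-- The degree of a polynomial, viewed in `ℤ ∪ {-∞}`. -/
noncomputable def degZ {K : Type*} [Field K] (p : K[X]) : WithBot ℤ :=
  p.degree.map fun a : ℕ => (a : ℤ)

/-- The `s`-row degree of a (row) vector of polynomials. -/
noncomputable def rdegRow {K : Type*} [Field K] {ν : Type*} [Fintype ν]
    (s : ν → ℤ) (v : ν → K[X]) : WithBot ℤ :=
  Finset.univ.sup fun j => degZ (v j) + (s j : WithBot ℤ)

/-- The `s`-row degree of a polynomial matrix. -/
noncomputable def rdeg {K : Type*} [Field K] {ι ν : Type*} [Fintype ν]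
    (s : ν → ℤ) (P : Matrix ι ν K[X]) : ι → WithBot ℤ :=
  fun i => rdegRow s (P i)

/-- The `t`-column degree of a polynomial matrix. -/
noncomputable def cdeg {K : Type*} [Field K] {ι ν : Type*} [Fintype ι]
    (t : ι → ℤ) (P : Matrix ι ν K[X]) : ν → WithBot ℤ :=
  fun j => Finset.univ.sup fun i => degZ (P i j) + (t i : WithBot ℤ)

/-- Coefficient of integer degree `d` of a polynomial (0 if `d < 0`). -/
noncomputable def coeffZ {K : Type*} [Field K] (p : K[X]) (d : ℤ) : K :=
  if 0 ≤ d then p.coeff d.toNat else 0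

/-- The `s`-leading matrix of a polynomial matrix. -/
noncomputable def lm {K : Type*} [Field K] {ι ν : Type*} [Fintype ν]
    (s : ν → ℤ) (P : Matrix ι ν K[X]) : Matrix ι ν K :=
  Matrix.of fun i j =>
    (rdeg s P i).recBotCoe 0 fun t => coeffZ (P i j) (t - s j)

/-- `P` is in `s`-reduced form: its `s`-leading matrix has full row rank,
i.e. its rows are linearly independent over `K`. -/
def IsReducedForm {K : Type*} [Field K] {ι ν : Type*} [Fintype ν]
    (s : ν → ℤ) (P : Matrix ι ν K[X]) : Prop :=
  LinearIndependent K fun i => lm s P i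

open Classical in
/-- The `s`-pivot index of a row vector: the largest column index where the
`s`-row degree is attained (with a nonzero entry); `⊥` for the zero row. -/
noncomputable def piv {K : Type*} [Field K] {ν : Type*} [Fintype ν] [LinearOrder ν]
    (s : ν → ℤ) (v : ν → K[X]) : WithBot ν :=
  (Finset.univ.filter fun j => v j ≠ 0 ∧ degZ (v j) + (s j : WithBot ℤ) = rdegRow s v).max

/-- The `s`-pivot degree of a row vector (junk value `0` for the zero row). -/
noncomputable def pivDeg {K : Type*} [Field K] {ν : Type*} [Fintype ν] [LinearOrder ν]
    (s : ν → ℤ) (v : ν → K[X]) : ℕ :=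
  ((piv s v).map fun j => (v j).natDegree).unbotD 0

/-- `P` is in `s`-weak Popov form: no zero row and strictly increasing `s`-pivot indices. -/
def IsWeakPopov {K : Type*} [Field K] {ι ν : Type*} [Fintype ν] [LinearOrder ν] [Preorder ι]
    (s : ν → ℤ) (P : Matrix ι ν K[X]) : Prop :=
  (∀ i, piv s (P i) ≠ ⊥) ∧ StrictMono fun i => piv s (P i)

/-- `P` is in `s`-unordered weak Popov form: no zero row and pairwise distinct
`s`-pivot indices. -/
def IsUWeakPopov {K : Type*} [Field K] {ι ν : Type*} [Fintype ν] [LinearOrder ν]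
    (s : ν → ℤ) (P : Matrix ι ν K[X]) : Prop :=
  (∀ i, piv s (P i) ≠ ⊥) ∧ Function.Injective fun i => piv s (P i)

/-- `P` is in `s`-Popov form: `s`-weak Popov, monic pivots, and each pivot entry
has degree strictly larger than the other entries of its column. -/
def IsPopov {K : Type*} [Field K] {ι ν : Type*} [Fintype ν] [LinearOrder ν] [Preorder ι]
    (s : ν → ℤ) (P : Matrix ι ν K[X]) : Prop :=
  IsWeakPopov s P ∧
    ∀ i (j : ν), piv s (P i) = (j : WithBot ν) →
      (P i j).Monic ∧ ∀ i', i' ≠ i → (P i' j).degree < (P i j).degree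

/-- The row space of a polynomial matrix. -/
noncomputable def rowSpace {K : Type*} [Field K] {ι ν : Type*} (P : Matrix ι ν K[X]) :
    Submodule K[X] (ν → K[X]) :=
  Submodule.span K[X] (Set.range fun i => P i)

/-- The rows of `B` form a basis of the module `M`. -/
def IsBasisOf {K : Type*} [Field K] {ι ν : Type*} (B : Matrix ι ν K[X])
    (M : Submodule K[X] (ν → K[X])) : Prop :=
  LinearIndependent K[X] (fun i => B i) ∧
    Submodule.span K[X] (Set.range fun i => B i) = M

/-- The left kernel of a polynomial matrix. -/
noncomputable def leftKernel {K : Type*} [Field K] {ι ν : Type*} [Fintype ι]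
    (F : Matrix ι ν K[X]) : Submodule K[X] (ι → K[X]) :=
  LinearMap.ker F.vecMulLinear

/-!
If a kernel vector `p` had its pivot in a row `k` of `F`, consider the column `j` in which row `k`
of `F` has its own `t`-pivot. In column `j` of the product `p * [F; G]`, the `k`-th summand has
shifted degree exactly `rdeg p`. The summands after `k` are smaller because the pivot of `p` is its
rightmost entry of maximal shifted degree, and those before `k` are smaller because the pivots of
the earlier rows of `F` lie strictly to the left of `j`. So nothing cancels the `k`-th summand,
although the sum is zero. Deleting the columns of `[K1 K2]` that contain no pivot then leaves the
remaining pivots in place.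
-/

section Degree

variable {K : Type*} [Field K]

@[simp]
theorem degZ_zero : degZ (0 : K[X]) = ⊥ := by
  simp [degZ]

@[simp]
theorem degZ_eq_bot {p : K[X]} : degZ p = ⊥ ↔ p = 0 := by
  simp [degZ]

theorem degZ_lt_degZ_iff {p q : K[X]} : degZ p < degZ q ↔ p.degree < q.degree :=
  (Nat.strictMono_cast.withBot_map : StrictMono (WithBot.map ((↑) : ℕ → ℤ))).lt_iff_lt

theorem degZ_mul (p q : K[X]) : degZ (p * q) = degZ p + degZ q := by
  simp only [degZ, degree_mul]
  exact WithBot.map_add (Nat.castAddMonoidHom ℤ) p.degree q.degree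

theorem degZ_sum_eq_of_forall_lt {ι : Type*} {s : Finset ι} {f : ι → K[X]} {k : ι} (hk : k ∈ s)
    (hfk : f k ≠ 0) (hlt : ∀ i ∈ s, i ≠ k → degZ (f i) < degZ (f k)) :
    degZ (∑ i ∈ s, f i) = degZ (f k) := by
  classical
  have hrest : (∑ i ∈ s.erase k, f i).degree < (f k).degree := by
    refine (degree_sum_le _ _).trans_lt ((Finset.sup_lt_iff ?_).mpr fun i hi => ?_)
    · exact bot_lt_iff_ne_bot.mpr (degree_ne_bot.mpr hfk)
    · exact degZ_lt_degZ_iff.mp (hlt i (Finset.mem_of_mem_erase hi) (Finset.ne_of_mem_erase hi))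
  rw [← Finset.add_sum_erase s f hk, degZ, degree_add_eq_left_of_degree_lt hrest, degZ]

end Degree

section Pivot

variable {K : Type*} [Field K] {ν : Type*} [Fintype ν] {s : ν → ℤ} {p : ν → K[X]}

theorem le_rdegRow (s : ν → ℤ) (p : ν → K[X]) (j : ν) :
    degZ (p j) + (s j : WithBot ℤ) ≤ rdegRow s p :=
  Finset.le_sup (f := fun j => degZ (p j) + (s j : WithBot ℤ)) (Finset.mem_univ j)

variable [LinearOrder ν]

theorem piv_eq_coe_iff {j : ν} :
    piv s p = j ↔ p j ≠ 0 ∧ degZ (p j) + (s j : WithBot ℤ) = rdegRow s p ∧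
      ∀ k, j < k → degZ (p k) + (s k : WithBot ℤ) < rdegRow s p := by
  classical
  constructor
  · intro h
    obtain ⟨hj, hdeg⟩ : p j ≠ 0 ∧ degZ (p j) + (s j : WithBot ℤ) = rdegRow s p := by
      simpa using Finset.mem_of_max h
    refine ⟨hj, hdeg, fun k hjk => (le_rdegRow s p k).lt_of_ne fun hk => ?_⟩
    have hbot : rdegRow s p ≠ ⊥ := by simp [← hdeg, hj]
    have hpk : p k ≠ 0 := fun h0 => hbot (by simp [← hk, h0])
    exact Finset.notMem_of_max_lt hjk h (by simp [hpk, hk])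
  · rintro ⟨hj, hdeg, hlt⟩
    refine le_antisymm (Finset.max_le fun k hk => ?_) (Finset.le_max (by simp [hj, hdeg]))
    exact WithBot.coe_le_coe.mpr <| not_lt.mp fun hjk =>
      (hlt k hjk).ne (Finset.mem_filter.mp hk).2.2

theorem degZ_add_lt_of_piv_lt {c : ℤ} {j : ν} (hc : rdegRow s p ≤ c) (hj : piv s p < j) :
    degZ (p j) + (s j : WithBot ℤ) < c := by
  rcases eq_or_ne (p j) 0 with h0 | h0
  · simp [h0]
  refine ((le_rdegRow s p j).lt_of_ne fun hdeg => ?_).trans_le hc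
  exact Finset.notMem_of_max_lt_coe hj (by simp [h0, hdeg])

theorem piv_comp_of_strictMono {μ : Type*} [Fintype μ] [LinearOrder μ] {f : μ → ν}
    (hf : StrictMono f) {j : μ} (h : piv s p = (f j : ν)) : piv (s ∘ f) (p ∘ f) = j := by
  obtain ⟨hj, hdeg, hlt⟩ := piv_eq_coe_iff.mp h
  have hrdeg : rdegRow (s ∘ f) (p ∘ f) = rdegRow s p :=
    le_antisymm (Finset.sup_le fun k _ => le_rdegRow s p (f k))
      (hdeg ▸ le_rdegRow (s ∘ f) (p ∘ f) j)
  exact piv_eq_coe_iff.mpr ⟨hj, hrdeg ▸ hdeg, fun k hk => hrdeg ▸ hlt (f k) (hf hk)⟩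

theorem IsWeakPopov.submatrix_of_strictMono {ι μ : Type*} [Preorder ι] [Fintype μ] [LinearOrder μ]
    {P : Matrix ι ν K[X]} (hP : IsWeakPopov s P) {f : μ → ν} (hf : StrictMono f)
    (hrange : ∀ i, ∃ j, piv s (P i) = (f j : ν)) : IsWeakPopov (s ∘ f) (P.submatrix id f) := by
  choose j hj using hrange
  have hpiv (i : ι) : piv (s ∘ f) (P.submatrix id f i) = j i := piv_comp_of_strictMono hf (hj i)
  refine ⟨fun i => by simp [hpiv], fun i i' hi => ?_⟩
  have hlt : piv s (P i) < piv s (P i') := hP.2 hi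
  rw [hj, hj, WithBot.coe_lt_coe, hf.lt_iff_lt] at hlt
  simpa only [hpiv, WithBot.coe_lt_coe] using hlt

end Pivot

section Kernel

variable {K : Type*} [Field K] {μ ν : Type*} [Fintype μ] [LinearOrder μ]
  {t : ν → ℤ} {w : μ → ℤ} {A : Matrix μ ν K[X]} {p : μ → K[X]} {k : μ}

theorem degZ_vecMul_add_eq_rdegRow {j : ν} (hp : piv w p = k)
    (hk : degZ (A k j) + (t j : WithBot ℤ) = w k)
    (hlt : ∀ l, l < k → degZ (A l j) + (t j : WithBot ℤ) < w l)
    (hle : ∀ l, k < l → degZ (A l j) + (t j : WithBot ℤ) ≤ w l) :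
    degZ ((p ᵥ* A) j) + (t j : WithBot ℤ) = rdegRow w p := by
  obtain ⟨hpk, hdeg, hpgt⟩ := piv_eq_coe_iff.mp hp
  have hterm : degZ (p k * A k j) + (t j : WithBot ℤ) = rdegRow w p := by
    rw [degZ_mul, add_assoc, hk, hdeg]
  have hother (l : μ) (hl : l ≠ k) : degZ (p l * A l j) + (t j : WithBot ℤ) < rdegRow w p := by
    rw [degZ_mul, add_assoc]
    rcases hl.lt_or_gt with hl | hl
    · rcases eq_or_ne (p l) 0 with h0 | h0
      · simp [h0, ← hdeg, bot_lt_iff_ne_bot, hpk]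
      · exact (WithBot.add_lt_add_left (degZ_eq_bot.not.mpr h0) (hlt l hl)).trans_le
          (le_rdegRow w p l)
    · exact (add_le_add_right (hle l hl) _).trans_lt (hpgt l hl)
  have hAk : A k j ≠ 0 := fun h0 => by simp [h0] at hk
  have hsum : degZ (∑ l, p l * A l j) = degZ (p k * A k j) :=
    degZ_sum_eq_of_forall_lt (Finset.mem_univ k) (mul_ne_zero hpk hAk) fun l _ hl =>
      lt_of_add_lt_add_right ((hother l hl).trans_eq hterm.symm)
  exact (congrArg (· + (t j : WithBot ℤ)) hsum).trans hterm

theorem piv_ne_of_mem_leftKernel [Fintype ν] [LinearOrder ν] (hp : p ∈ leftKernel A)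
    (hA : ∀ l, rdeg t A l ≤ w l) (hk : rdeg t A k = w k) (hne : piv t (A k) ≠ ⊥)
    (hlt : ∀ l, l < k → piv t (A l) < piv t (A k)) : piv w p ≠ k := by
  intro hpk
  obtain ⟨j, hj⟩ := WithBot.ne_bot_iff_exists.mp hne
  have hdeg : degZ ((p ᵥ* A) j) + (t j : WithBot ℤ) = rdegRow w p :=
    degZ_vecMul_add_eq_rdegRow hpk ((piv_eq_coe_iff.mp hj.symm).2.1.trans hk)
      (fun l hl => degZ_add_lt_of_piv_lt (hA l) (hj ▸ hlt l hl))
      (fun l _ => (le_rdegRow t (A l) j).trans (hA l))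
  have hzero : p ᵥ* A = 0 := LinearMap.mem_ker.mp hp
  obtain ⟨hpk0, hrdeg, -⟩ := piv_eq_coe_iff.mp hpk
  have hbot : rdegRow w p ≠ ⊥ := by simp [← hrdeg, hpk0]
  exact hbot (by simp [← hdeg, hzero])

theorem piv_ne_castAdd_of_mem_leftKernel [Fintype ν] [LinearOrder ν] {n m : ℕ}
    {F : Matrix (Fin n) ν K[X]} (hF : IsWeakPopov t F) {u : Fin n → ℤ}
    (hu : ∀ i, rdeg t F i = u i) {G : Matrix (Fin m) ν K[X]} {v : Fin m → ℤ}
    (hv : ∀ i, rdeg t G i ≤ v i) {p : Fin (n + m) → K[X]}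
    (hp : p ∈ leftKernel ((Matrix.fromRows F G).submatrix finSumFinEquiv.symm id)) (i : Fin n) :
    piv (Fin.append u v) p ≠ (Fin.castAdd m i : Fin (n + m)) := by
  set A := (Matrix.fromRows F G).submatrix (finSumFinEquiv (m := n) (n := m)).symm id with hA
  have hAF (l : Fin n) : A (Fin.castAdd m l) = F l := by ext; simp [hA]
  have hAG (l : Fin m) : A (Fin.natAdd n l) = G l := by ext; simp [hA]
  refine piv_ne_of_mem_leftKernel (t := t) hp (fun l => ?_) ?_ ?_ fun l hl => ?_
  · induction l using Fin.addCases with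
    | left l => simpa [rdeg, hAF] using (hu l).le
    | right l => simpa [rdeg, hAG] using hv l
  · simpa [rdeg, hAF] using hu i
  · simpa [hAF] using hF.1 i
  · induction l using Fin.addCases with
    | left l => simpa [hAF] using hF.2 (show l < i from hl)
    | right l => exact absurd hl (show ¬n + (l : ℕ) < i by lia)

end Kernel

theorem kernel_pivots_general {K : Type*} [Field K] {ι ν : Type*} [Preorder ι] [Fintype ν]
    [LinearOrder ν] {n m : ℕ} {t : ν → ℤ} {F : Matrix (Fin n) ν K[X]} (hF : IsWeakPopov t F)
    {u : Fin n → ℤ} (hu : ∀ i, rdeg t F i = u i)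
    {G : Matrix (Fin m) ν K[X]} {v : Fin m → ℤ} (hv : ∀ i, rdeg t G i ≤ v i)
    {P : Matrix ι (Fin (n + m)) K[X]}
    (hP : ∀ i, P i ∈ leftKernel ((Matrix.fromRows F G).submatrix finSumFinEquiv.symm id))
    (hwp : IsWeakPopov (Fin.append u v) P) :
    (∀ i (j : Fin (n + m)), piv (Fin.append u v) (P i) = j → n ≤ (j : ℕ)) ∧
      IsWeakPopov v (P.submatrix id (Fin.natAdd n)) := by
  have hright (i : ι) :
      ∃ j : Fin m, piv (Fin.append u v) (P i) = (Fin.natAdd n j : Fin (n + m)) := by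
    obtain ⟨k, hk⟩ := WithBot.ne_bot_iff_exists.mp (hwp.1 i)
    induction k using Fin.addCases with
    | left k => exact absurd hk.symm (piv_ne_castAdd_of_mem_leftKernel hF hu hv (hP i) k)
    | right k => exact ⟨k, hk.symm⟩
  refine ⟨fun i j hj => ?_, ?_⟩
  · obtain ⟨k, hk⟩ := hright i
    obtain rfl : j = Fin.natAdd n k := WithBot.coe_injective (hj.symm.trans hk)
    exact Fin.le_coe_natAdd n k
  · have hshift : Fin.append u v ∘ Fin.natAdd n = v := funext (Fin.append_right u v)
    exact hshift ▸ hwp.submatrix_of_strictMono (Fin.strictMono_natAdd n) hright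

/-- Lemma 2.6, kernel pivots: for a `(u,v)`-weak Popov basis
`[K1 K2]` of the left kernel of `[F; G]` with `F` in `t`-weak Popov form,
`u = rdeg_t(F)` and `v ≥ rdeg_t(G)`, all `(u,v)`-pivots lie in `K2`, and `K2`
is in `v`-weak Popov form. -/
theorem kernel_pivots {K : Type*} [Field K] {n m : ℕ}
    (t : Fin n → ℤ) (F : Matrix (Fin n) (Fin n) K[X]) (hF : IsWeakPopov t F)
    (u : Fin n → ℤ) (hu : ∀ i, rdeg t F i = ((u i : ℤ) : WithBot ℤ))
    (G : Matrix (Fin m) (Fin n) K[X]) (v : Fin m → ℤ)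
    (hv : ∀ i, rdeg t G i ≤ ((v i : ℤ) : WithBot ℤ))
    (Kb : Matrix (Fin m) (Fin (n + m)) K[X])
    (hbasis : IsBasisOf Kb (leftKernel
      ((Matrix.fromRows F G).submatrix (⇑(finSumFinEquiv (m := n) (n := m)).symm) id)))
    (hwp : IsWeakPopov (Fin.append u v) Kb) :
    (∀ i (j : Fin (n + m)),
        piv (Fin.append u v) (Kb i) = (j : WithBot (Fin (n + m))) → n ≤ (j : ℕ)) ∧
    IsWeakPopov v (Matrix.of fun i (j : Fin m) => Kb i (Fin.natAdd n j)) :=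
  kernel_pivots_general hF hu hv (fun i => hbasis.2 ▸ Submodule.subset_span ⟨i, rfl⟩) hwp
end

section
/- Let K be a field, s ∈ ℤ^n, and let P ∈ K[x]^{m×n} be in s-reduced form with t = rdeg_s(P) ∈ ℤ^m nondecreasing. Then: (1) there exists an invertible lower triangular matrix T ∈ K^{m×m} such that T·lm_s(P) is in 0-unordered weak Popov form; (2) for any invertible lower triangular T ∈ K^{m×m} such that T·lm_s(P) is in 0-unordered weak Popov form, the matrix U ∈ K[x]^{m×m} with entries U_{i,j} = T_{i,j} x^{t_i − t_j} has polynomial entries (since T is lower triangular and t is nondecreasing) and is unimodular; moreover rdeg_s(UP) = rdeg_s(P), lm_s(UP) = T·lm_s(P), and UP is in s-unordered weak Popov form. -/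
open Polynomial Matrix

/-!
Grade `v ∈ K[x]^ν` by `s`-degree, so that the slice of degree `d` collects the coefficients of
degree `d - s_j` of the entries `v_j`. The slice in the top degree is the `s`-leading row, and the
`s`-pivot is the last nonzero position of that slice. Left multiplication by
`U = x^t T x^{-t}` acts on slices through the constant matrix `T`: the slices of `U P` in degrees
`t_i + e` are `T` times those of `P`, for every `e`. Taking `e > 0` bounds the row degrees of `U P`,
and `e = 0` identifies its leading matrix. For the existence of `T`, choose in each row the
combination with unit coefficient on that row, and none on later rows, whose last nonzero position
is minimal; two equal positions would allow an elimination step contradicting minimality.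
-/

section LastNonzero

variable {ν R : Type*} [Fintype ν] [LinearOrder ν]

open Classical in
/-- The position of the last nonzero entry of a vector, `⊥` for the zero vector: the `0`-pivot
index of a constant row. -/
noncomputable def lastNonzero [Zero R] (v : ν → R) : WithBot ν :=
  (Finset.univ.filter fun j => v j ≠ 0).max

theorem lastNonzero_eq_bot_iff [Zero R] {v : ν → R} : lastNonzero v = ⊥ ↔ v = 0 := by
  simp [lastNonzero, Finset.max_eq_bot, Finset.filter_eq_empty_iff, funext_iff]

theorem lastNonzero_lt_coe_iff [Zero R] {v : ν → R} {j : ν} :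
    lastNonzero v < j ↔ ∀ k, j ≤ k → v k = 0 := by
  simp only [lastNonzero, Finset.max_eq_sup_withBot, Finset.sup_lt_iff (WithBot.bot_lt_coe j),
    Finset.mem_filter, Finset.mem_univ, true_and, WithBot.coe_lt_coe]
  exact forall_congr' fun k => by rw [← not_le, not_imp_not]

theorem apply_ne_zero_of_lastNonzero_eq [Zero R] {v : ν → R} {j : ν} (h : lastNonzero v = j) :
    v j ≠ 0 := by
  simpa using Finset.mem_of_max h

theorem apply_eq_zero_of_lastNonzero_lt [Zero R] {v : ν → R} {j : ν} (h : lastNonzero v < j) :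
    v j = 0 :=
  lastNonzero_lt_coe_iff.mp h j le_rfl

theorem exists_lastNonzero_sub_smul_lt [DivisionRing R] {v w : ν → R} (hv : v ≠ 0)
    (h : lastNonzero v = lastNonzero w) :
    ∃ a : R, lastNonzero (v - a • w) < lastNonzero v := by
  obtain ⟨j, hj⟩ := WithBot.ne_bot_iff_exists.mp (mt lastNonzero_eq_bot_iff.mp hv)
  have hwj : w j ≠ 0 := apply_ne_zero_of_lastNonzero_eq (h.symm.trans hj.symm)
  refine ⟨v j / w j, ?_⟩
  rw [← hj, lastNonzero_lt_coe_iff]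
  intro k hjk
  rcases hjk.eq_or_lt with rfl | hlt
  · simp [div_mul_cancel₀ _ hwj]
  · have hlt' : lastNonzero v < (k : WithBot ν) := hj ▸ WithBot.coe_lt_coe.mpr hlt
    simp [apply_eq_zero_of_lastNonzero_lt hlt', apply_eq_zero_of_lastNonzero_lt (h ▸ hlt')]

theorem exists_unitLowerTriangular_mul_lastNonzero_injective {K ι : Type*} [DivisionRing K]
    [Fintype ι] [LinearOrder ι] (L : Matrix ι ν K) (hL : LinearIndependent K L.row) :
    ∃ T : Matrix ι ι K, T.IsLowerTriangular ∧ (∀ i, T i i = 1) ∧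
      (∀ i, (T * L) i ≠ 0) ∧ Function.Injective fun i => lastNonzero ((T * L) i) := by
  let candidates (i : ι) : Set (ι → K) := {c | c i = 1 ∧ ∀ j, i < j → c j = 0}
  have hmin : ∀ i, ∃ c, MinimalFor (· ∈ candidates i) (fun c => lastNonzero (c ᵥ* L)) c :=
    fun i => exists_minimalFor_of_wellFoundedLT _ _
      ⟨Pi.single i 1, by simp, fun j hj => by simp [hj.ne']⟩
  choose T hT using hmin
  have hdiag : ∀ i, T i i = 1 := fun i => (hT i).prop.1
  have habove : ∀ i j, i < j → T i j = 0 := fun i => (hT i).prop.2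
  have hne : ∀ i, T i ᵥ* L ≠ 0 := fun i h => by
    have hTi : T i = 0 := Matrix.vecMul_injective_iff.mpr hL (by simpa using h)
    simpa [hTi] using hdiag i
  refine ⟨Matrix.of T, fun i j => habove i j, hdiag, hne, .of_lt_imp_ne fun k i hki heq => ?_⟩
  obtain ⟨a, ha⟩ := exists_lastNonzero_sub_smul_lt (w := T k ᵥ* L) (hne i) heq.symm
  have hcand : T i - a • T k ∈ candidates i :=
    ⟨by simp [hdiag i, habove k i hki],
      fun j hij => by simp [habove i j hij, habove k j (hki.trans hij)]⟩
  rw [← Matrix.smul_vecMul, ← Matrix.sub_vecMul] at ha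
  exact (hT i).not_lt hcand ha

end LastNonzero

section Degree

variable {K : Type*} [Field K]

theorem degZ_of_ne_zero {p : K[X]} (hp : p ≠ 0) :
    degZ p = ((p.natDegree : ℤ) : WithBot ℤ) := by
  rw [degZ, Polynomial.degree_eq_natDegree hp]
  rfl

theorem coeffZ_zero (d : ℤ) : coeffZ (0 : K[X]) d = 0 := by
  simp [coeffZ]

theorem coeffZ_sum {ι : Type*} (S : Finset ι) (f : ι → K[X]) (d : ℤ) :
    coeffZ (∑ i ∈ S, f i) d = ∑ i ∈ S, coeffZ (f i) d := by
  unfold coeffZ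
  split_ifs <;> simp

theorem coeffZ_C_mul_X_pow_mul (a : K) (e : ℕ) (p : K[X]) (d : ℤ) :
    coeffZ (C a * X ^ e * p) d = a * coeffZ p (d - e) := by
  unfold coeffZ
  rw [mul_assoc, coeff_C_mul, coeff_X_pow_mul']
  split_ifs with hd he hde <;> first | omega | simp

theorem coeffZ_ne_zero_of_degZ_eq {p : K[X]} {d : ℤ} (h : degZ p = d) : coeffZ p d ≠ 0 := by
  have hp : p ≠ 0 := by
    rintro rfl
    simp [degZ] at h
  rw [degZ_of_ne_zero hp, WithBot.coe_inj] at h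
  simp [coeffZ, ← h, hp]

theorem le_degZ_of_coeffZ_ne_zero {p : K[X]} {d : ℤ} (h : coeffZ p d ≠ 0) : d ≤ degZ p := by
  have hp : p ≠ 0 := by
    rintro rfl
    exact h (coeffZ_zero d)
  rw [degZ_of_ne_zero hp, WithBot.coe_le_coe]
  unfold coeffZ at h
  split_ifs at h with hd
  · have := le_natDegree_of_ne_zero h
    omega
  · exact absurd rfl h

theorem degZ_add_coe_eq_coe_iff {p : K[X]} {a d : ℤ} :
    degZ p + (a : WithBot ℤ) = d ↔ degZ p = ((d - a : ℤ) : WithBot ℤ) := by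
  induction degZ p with
  | bot => simp
  | coe b => rw [← WithBot.coe_add, WithBot.coe_inj, WithBot.coe_inj, eq_sub_iff_add_eq]

end Degree

section Slice

variable {K ι ν : Type*} [Field K]

/-- The slice of `s`-degree `d` of a row `v`: its `j`-th entry is the coefficient of degree
`d - s_j` of `v_j`, which is `0` when `d < s_j`. -/
noncomputable def slice (s : ν → ℤ) (d : ℤ) (v : ν → K[X]) : ν → K :=
  fun j => coeffZ (v j) (d - s j)

variable {s : ν → ℤ} {v : ν → K[X]} {d : ℤ}

theorem le_degZ_add_of_slice_apply_ne_zero {j : ν} (h : slice s d v j ≠ 0) :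
    d ≤ degZ (v j) + (s j : WithBot ℤ) := by
  calc (d : WithBot ℤ) = ((d - s j : ℤ) : WithBot ℤ) + (s j : WithBot ℤ) := by
        rw [← WithBot.coe_add, sub_add_cancel]
    _ ≤ degZ (v j) + (s j : WithBot ℤ) := by
        gcongr
        exact le_degZ_of_coeffZ_ne_zero h

theorem slice_apply_ne_zero_of_degZ_add_eq {j : ν} (h : degZ (v j) + (s j : WithBot ℤ) = d) :
    slice s d v j ≠ 0 :=
  coeffZ_ne_zero_of_degZ_eq (degZ_add_coe_eq_coe_iff.mp h)

variable [Fintype ν]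

theorem degZ_add_le_rdegRow (s : ν → ℤ) (v : ν → K[X]) (j : ν) :
    degZ (v j) + (s j : WithBot ℤ) ≤ rdegRow s v :=
  Finset.le_sup (f := fun j => degZ (v j) + (s j : WithBot ℤ)) (Finset.mem_univ j)

theorem slice_eq_zero_of_rdegRow_lt (h : rdegRow s v < d) : slice s d v = 0 := by
  by_contra hne
  obtain ⟨j, hj⟩ := Function.ne_iff.mp hne
  exact ((le_degZ_add_of_slice_apply_ne_zero hj).trans (degZ_add_le_rdegRow s v j)).not_gt h

theorem rdegRow_eq_of_slice (hd : slice s d v ≠ 0) (hgt : ∀ e, d < e → slice s e v = 0) :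
    rdegRow s v = d := by
  apply le_antisymm
  · refine Finset.sup_le fun j _ => ?_
    by_contra! hlt
    obtain ⟨e, he⟩ := WithBot.ne_bot_iff_exists.mp hlt.ne_bot
    rw [← he, WithBot.coe_lt_coe] at hlt
    exact slice_apply_ne_zero_of_degZ_add_eq he.symm (congrFun (hgt e hlt) j)
  · obtain ⟨j, hj⟩ := Function.ne_iff.mp hd
    exact (le_degZ_add_of_slice_apply_ne_zero hj).trans (degZ_add_le_rdegRow s v j)

theorem eq_zero_of_rdegRow_eq_bot (h : rdegRow s v = ⊥) : v = 0 := by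
  funext j
  by_contra hj
  have hle := degZ_add_le_rdegRow s v j
  rw [h, degZ_of_ne_zero hj, ← WithBot.coe_add, le_bot_iff] at hle
  exact WithBot.coe_ne_bot hle

theorem lm_row_eq_slice {P : Matrix ι ν K[X]} {i : ι} (h : rdeg s P i = d) :
    lm s P i = slice s d (P i) := by
  funext j
  simp [lm, h, slice]

theorem lm_row_eq_zero {P : Matrix ι ν K[X]} {i : ι} (h : rdeg s P i = ⊥) : lm s P i = 0 := by
  funext j
  simp [lm, h]

theorem lm_zero_map_C (M : Matrix ι ν K) : lm (fun _ => 0) (M.map C) = M := by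
  funext i
  have hslice : slice (fun _ => 0) 0 (M.map C i) = M i := by
    funext j
    simp [slice, coeffZ]
  by_cases hi : M i = 0
  · rw [hi]
    exact lm_row_eq_zero (by simp [rdeg, rdegRow, degZ, congrFun hi])
  · rw [lm_row_eq_slice (rdegRow_eq_of_slice (hslice.symm ▸ hi) fun e he => ?_), hslice]
    funext j
    simp [slice, coeffZ, he.le, coeff_C_of_ne_zero (n := e.toNat) (by omega)]

end Slice

section Pivot

variable {K ι ν : Type*} [Field K] [Fintype ν] [LinearOrder ν]

theorem piv_eq_lastNonzero_slice {s : ν → ℤ} {v : ν → K[X]} {d : ℤ} (h : rdegRow s v = d) :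
    piv s v = lastNonzero (slice s d v) := by
  classical
  unfold piv lastNonzero
  congr 1
  refine Finset.filter_congr fun j _ => ⟨fun hj => ?_, fun hj => ⟨fun hvj => ?_, ?_⟩⟩
  · exact slice_apply_ne_zero_of_degZ_add_eq (hj.2.trans h)
  · exact hj (by rw [slice, hvj, coeffZ_zero])
  · exact le_antisymm (degZ_add_le_rdegRow s v j) (h ▸ le_degZ_add_of_slice_apply_ne_zero hj)

theorem piv_eq_lastNonzero_lm (s : ν → ℤ) (P : Matrix ι ν K[X]) (i : ι) :
    piv s (P i) = lastNonzero (lm s P i) := by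
  cases h : rdeg s P i with
  | bot =>
    rw [lm_row_eq_zero h, lastNonzero_eq_bot_iff.mpr rfl, eq_zero_of_rdegRow_eq_bot h]
    simp [piv]
  | coe d => rw [lm_row_eq_slice h, piv_eq_lastNonzero_slice h]

theorem isUWeakPopov_iff_lastNonzero_lm {s : ν → ℤ} {P : Matrix ι ν K[X]} :
    IsUWeakPopov s P ↔
      (∀ i, lm s P i ≠ 0) ∧ Function.Injective fun i => lastNonzero (lm s P i) := by
  simp only [IsUWeakPopov, piv_eq_lastNonzero_lm, ne_eq, lastNonzero_eq_bot_iff]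

theorem isUWeakPopov_zero_map_C_iff {M : Matrix ι ν K} :
    IsUWeakPopov (fun _ => 0) (M.map C) ↔
      (∀ i, M i ≠ 0) ∧ Function.Injective fun i => lastNonzero (M i) := by
  rw [isUWeakPopov_iff_lastNonzero_lm, lm_zero_map_C]

end Pivot

section ConjXPow

variable {ι : Type*}

/-- The polynomial matrix `x^t T x^{-t}`, with entries `T_{i,j} x^{t_i - t_j}`. The exponent is
truncated at `0`, so this encoding is faithful only if `T_{i,j} = 0` whenever `t_i < t_j`, that is,
if `T` is `BlockTriangular` for `OrderDual.toDual ∘ t`. -/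
noncomputable def conjXPow {R : Type*} [Semiring R] (t : ι → ℤ) (T : Matrix ι ι R) :
    Matrix ι ι R[X] :=
  Matrix.of fun i j => C (T i j) * X ^ (t i - t j).toNat

variable [Fintype ι] {t : ι → ℤ}

theorem det_conjXPow [DecidableEq ι] {R : Type*} [CommRing R] {T : Matrix ι ι R}
    (hT : T.BlockTriangular (OrderDual.toDual ∘ t)) : (conjXPow t T).det = C T.det := by
  simp only [Matrix.det_apply', map_sum, map_mul, map_prod, map_intCast]
  refine Finset.sum_congr rfl fun σ _ => congrArg _ ?_
  by_cases hσ : ∀ i, t i ≤ t (σ i)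
  · have hexp : ∑ i, (t (σ i) - t i).toNat = 0 := by
      zify
      simp only [Int.toNat_of_nonneg (sub_nonneg.mpr (hσ _)), Finset.sum_sub_distrib,
        Equiv.sum_comp σ t, sub_self]
    simp only [conjXPow, Matrix.of_apply, Finset.prod_mul_distrib, Finset.prod_pow_eq_pow_sum,
      hexp, pow_zero, mul_one]
  · push Not at hσ
    obtain ⟨i, hi⟩ := hσ
    have hzero : T (σ i) i = 0 := hT hi
    rw [Finset.prod_eq_zero (Finset.mem_univ i), Finset.prod_eq_zero (Finset.mem_univ i)] <;>
      simp [conjXPow, hzero]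

variable {K ν : Type*} [Field K] {T : Matrix ι ι K}

theorem slice_conjXPow_mul (hT : T.BlockTriangular (OrderDual.toDual ∘ t)) (s : ν → ℤ)
    (P : Matrix ι ν K[X]) (e : ℤ) (i : ι) :
    slice s (t i + e) ((conjXPow t T * P) i) =
      (T * Matrix.of fun k => slice s (t k + e) (P k)) i := by
  funext j
  simp only [slice, Matrix.mul_apply, coeffZ_sum, conjXPow, Matrix.of_apply,
    coeffZ_C_mul_X_pow_mul]
  refine Finset.sum_congr rfl fun k _ => ?_
  rcases lt_or_ge (t i) (t k) with hlt | hge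
  · have hzero : T i k = 0 := hT hlt
    simp only [hzero, zero_mul]
  · rw [Int.toNat_of_nonneg (sub_nonneg.mpr hge)]
    congr 2
    ring

variable [Fintype ν] {s : ν → ℤ} {P : Matrix ι ν K[X]}

theorem slice_conjXPow_mul_eq_mul_lm (ht : ∀ i, rdeg s P i = t i)
    (hT : T.BlockTriangular (OrderDual.toDual ∘ t)) (i : ι) :
    slice s (t i) ((conjXPow t T * P) i) = (T * lm s P) i := by
  have hlm : (Matrix.of fun k => slice s (t k) (P k)) = lm s P :=
    funext fun k => (lm_row_eq_slice (ht k)).symm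
  simpa [hlm] using slice_conjXPow_mul hT s P 0 i

theorem rdeg_conjXPow_mul (ht : ∀ i, rdeg s P i = t i)
    (hT : T.BlockTriangular (OrderDual.toDual ∘ t)) {i : ι} (hi : (T * lm s P) i ≠ 0) :
    rdeg s (conjXPow t T * P) i = t i := by
  refine rdegRow_eq_of_slice (by rwa [slice_conjXPow_mul_eq_mul_lm ht hT]) fun d hd => ?_
  obtain ⟨e, rfl⟩ : ∃ e, d = t i + e := ⟨d - t i, by ring⟩
  have hvanish : (Matrix.of fun k => slice s (t k + e) (P k)) = 0 := funext fun k =>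
    slice_eq_zero_of_rdegRow_lt ((ht k).trans_lt (WithBot.coe_lt_coe.mpr (by omega)))
  rw [slice_conjXPow_mul hT, hvanish, Matrix.mul_zero]
  rfl

theorem lm_conjXPow_mul (ht : ∀ i, rdeg s P i = t i)
    (hT : T.BlockTriangular (OrderDual.toDual ∘ t)) (hne : ∀ i, (T * lm s P) i ≠ 0) :
    lm s (conjXPow t T * P) = T * lm s P :=
  funext fun i => by
    rw [lm_row_eq_slice (rdeg_conjXPow_mul ht hT (hne i)), slice_conjXPow_mul_eq_mul_lm ht hT]

end ConjXPow

theorem reduced_to_uweakPopov_general {K ι ν : Type*} [Field K] [Fintype ι] [LinearOrder ι]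
    [Fintype ν] [LinearOrder ν] (s : ν → ℤ) (P : Matrix ι ν K[X]) :
    (IsReducedForm s P → ∃ T : Matrix ι ι K, T.IsLowerTriangular ∧ IsUnit T.det ∧
      IsUWeakPopov (fun _ => 0) ((T * lm s P).map C)) ∧
    ∀ (t : ι → ℤ) (T : Matrix ι ι K), (∀ i, rdeg s P i = t i) →
      T.BlockTriangular (OrderDual.toDual ∘ t) → IsUnit T.det →
      IsUWeakPopov (fun _ => 0) ((T * lm s P).map C) →
      IsUnit (conjXPow t T).det ∧ (∀ i, rdeg s (conjXPow t T * P) i = t i) ∧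
        lm s (conjXPow t T * P) = T * lm s P ∧ IsUWeakPopov s (conjXPow t T * P) := by
  refine ⟨fun hred => ?_, fun t T ht hT hdet hpop => ?_⟩
  · obtain ⟨T, hlower, hdiag, hpop⟩ :=
      exists_unitLowerTriangular_mul_lastNonzero_injective (lm s P) hred
    refine ⟨T, hlower, ?_, isUWeakPopov_zero_map_C_iff.mpr hpop⟩
    rw [Matrix.det_of_isLowerTriangular T hlower]
    simp [hdiag]
  · rw [isUWeakPopov_zero_map_C_iff] at hpop
    have hlm : lm s (conjXPow t T * P) = T * lm s P := lm_conjXPow_mul ht hT hpop.1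
    refine ⟨?_, fun i => rdeg_conjXPow_mul ht hT (hpop.1 i), hlm, ?_⟩
    · exact det_conjXPow hT ▸ hdet.map C
    · rwa [isUWeakPopov_iff_lastNonzero_lm, hlm]

/-- Lemma 4.1: for `P` in `s`-reduced form with
nondecreasing `s`-row degree `t`, there is an invertible lower triangular
`T ∈ K^{m×m}` with `T·lm_s(P)` in `0`-unordered weak Popov form; and for any
such `T`, the matrix `U = (T_{i,j} x^{t_i−t_j})_{i,j}` is unimodular,
`rdeg_s(UP) = rdeg_s(P)`, `lm_s(UP) = T·lm_s(P)`, and `UP` is in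
`s`-unordered weak Popov form. -/
theorem reduced_to_uweakPopov {K : Type*} [Field K] {m n : ℕ}
    (s : Fin n → ℤ) (P : Matrix (Fin m) (Fin n) K[X]) (hred : IsReducedForm s P)
    (t : Fin m → ℤ) (ht : ∀ i, rdeg s P i = ((t i : ℤ) : WithBot ℤ))
    (htmono : Monotone t) :
    (∃ T : Matrix (Fin m) (Fin m) K, (∀ i j, i < j → T i j = 0) ∧ IsUnit T.det ∧
        IsUWeakPopov (fun _ => (0 : ℤ)) ((T * lm s P).map Polynomial.C)) ∧
    (∀ T : Matrix (Fin m) (Fin m) K, (∀ i j, i < j → T i j = 0) → IsUnit T.det →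
      IsUWeakPopov (fun _ => (0 : ℤ)) ((T * lm s P).map Polynomial.C) →
      let U : Matrix (Fin m) (Fin m) K[X] :=
        Matrix.of fun i j => Polynomial.C (T i j) * Polynomial.X ^ (t i - t j).toNat
      IsUnit U.det ∧ (∀ i, rdeg s (U * P) i = ((t i : ℤ) : WithBot ℤ)) ∧
        lm s (U * P) = T * lm s P ∧ IsUWeakPopov s (U * P)) := by
  obtain ⟨hexists, hconj⟩ := reduced_to_uweakPopov_general s P
  exact ⟨hexists hred, fun T hT => hconj t T ht fun i j hij => hT i j (htmono.reflect_lt hij)⟩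
end
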